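/- Let h ∈ ℝ[x₁,…,xₙ] be a homogeneous polynomial hyperbolic with respect to e ∈ ℝⁿ, and let a ∈ ℝⁿ. For every f in the interior of the hyperbolicity cone Λ_e(h), the order of vanishing of the univariate polynomial h_{a,f}(t) := h(a − tf) at t = 0 equals the multiplicity of h at a (in particular, this order is independent of the choice of f in the interior of Λ_e(h)). -/

import Mathlib

open MvPolynomial

/-- The univariate polynomial `t ↦ h(a + t·v)` obtained by restricting a multivariate
polynomial `h` to the line through `a` with direction `v`. -/
noncomputable def linePoly {n : ℕ} (h : MvPolynomial (Fin n) ℝ) (a v : Fin n → ℝ) :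
    Polynomial ℝ :=
  MvPolynomial.aeval (fun i => Polynomial.C (a i) + Polynomial.C (v i) * Polynomial.X) h

/-- A real univariate polynomial has only real roots. -/
def RealRooted (q : Polynomial ℝ) : Prop :=
  ∀ z : ℂ, Polynomial.aeval z q = 0 → z.im = 0

/-- A real univariate polynomial has only non-negative real roots. -/
def NonnegRealRooted (q : Polynomial ℝ) : Prop :=
  ∀ z : ℂ, Polynomial.aeval z q = 0 → z.im = 0 ∧ 0 ≤ z.re

/-- `h` is hyperbolic in direction `e`: `h(e) ≠ 0` and for all `a` the univariate
polynomial `t ↦ h(a - t·e)` has only real roots. -/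
def IsHyperbolic {n : ℕ} (h : MvPolynomial (Fin n) ℝ) (e : Fin n → ℝ) : Prop :=
  MvPolynomial.eval e h ≠ 0 ∧ ∀ a : Fin n → ℝ, RealRooted (linePoly h a (-e))

/-- The hyperbolicity cone `Λ_e(h)`. -/
def hypCone {n : ℕ} (h : MvPolynomial (Fin n) ℝ) (e : Fin n → ℝ) : Set (Fin n → ℝ) :=
  {a | NonnegRealRooted (linePoly h a (-e))}

/-- multiplicity (order of vanishing) of `h` at `a`: the smallest `m` such that the
degree-`m` homogeneous component of `h(x + a)` is non-zero. -/
noncomputable def multAt {n : ℕ} (h : MvPolynomial (Fin n) ℝ) (a : Fin n → ℝ) : ℕ :=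
  sInf {m | MvPolynomial.homogeneousComponent m
    (MvPolynomial.aeval (fun i => MvPolynomial.X i + MvPolynomial.C (a i)) h) ≠ 0}

/-- `p` is a real-zero polynomial with respect to `e`. -/
def IsRealZero {n : ℕ} (p : MvPolynomial (Fin n) ℝ) (e : Fin n → ℝ) : Prop :=
  MvPolynomial.eval e p ≠ 0 ∧ ∀ v : Fin n → ℝ, RealRooted (linePoly p e v)

/-- The rigidly convex set `S_e(p)` of a real-zero polynomial. -/
def rigidSet {n : ℕ} (p : MvPolynomial (Fin n) ℝ) (e : Fin n → ℝ) : Set (Fin n → ℝ) :=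
  {a | ∀ t : ℝ, 0 ≤ t → t < 1 → ¬ (linePoly p e (a - e)).IsRoot t}

/-- A polynomial is strictly quasi-concave at `a` if its Hessian at `a` is negative
definite on the orthogonal complement of its gradient at `a`. -/
def StrictQuasiConcaveAt {n : ℕ} (g : MvPolynomial (Fin n) ℝ) (a : Fin n → ℝ) : Prop :=
  ∀ v : Fin n → ℝ, v ≠ 0 →
    (∑ i, v i * MvPolynomial.eval a (MvPolynomial.pderiv i g)) = 0 →
    (∑ i, ∑ j, v i * v j *
      MvPolynomial.eval a (MvPolynomial.pderiv i (MvPolynomial.pderiv j g))) < 0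

/-- A spectrahedral shadow (cone version): a linear image of
`{a : a₁M₁ + ⋯ + aₘMₘ ⪰ 0}` for real symmetric matrices `Mᵢ`. -/
def IsSpectrahedralShadowCone {n : ℕ} (S : Set (Fin n → ℝ)) : Prop :=
  ∃ (m d : ℕ) (M : Fin m → Matrix (Fin d) (Fin d) ℝ)
    (L : (Fin m → ℝ) →ₗ[ℝ] (Fin n → ℝ)),
      (∀ i, (M i).IsSymm) ∧ S = L '' {a | (∑ i, a i • M i).PosSemidef}

/-- A spectrahedral shadow: a linear image of
`{b : M₀ + b₁M₁ + ⋯ + bₘMₘ ⪰ 0}` for real symmetric matrices `Mᵢ`. -/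
def IsSpectrahedralShadow {n : ℕ} (S : Set (Fin n → ℝ)) : Prop :=
  ∃ (m d : ℕ) (M₀ : Matrix (Fin d) (Fin d) ℝ) (M : Fin m → Matrix (Fin d) (Fin d) ℝ)
    (L : (Fin m → ℝ) →ₗ[ℝ] (Fin n → ℝ)),
      M₀.IsSymm ∧ (∀ i, (M i).IsSymm) ∧
      S = L '' {b | (M₀ + ∑ i, b i • M i).PosSemidef}

/-- A convex set is pointed if it contains no affine line. -/
def PointedSet {n : ℕ} (S : Set (Fin n → ℝ)) : Prop :=
  ¬ ∃ (a v : Fin n → ℝ), v ≠ 0 ∧ ∀ t : ℝ, a + t • v ∈ S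

/-- Directional derivative `∂_e h = Σᵢ eᵢ ∂h/∂xᵢ`. -/
noncomputable def dirDeriv {n : ℕ} (e : Fin n → ℝ) (h : MvPolynomial (Fin n) ℝ) :
    MvPolynomial (Fin n) ℝ :=
  ∑ i, e i • MvPolynomial.pderiv i h

/-!
Call the set of imaginary parts of complex zeros of `h` its imaginary projection.

First (Gårding), if `f` lies in the interior of `Λ_e(h)`, then `f` is not in the imaginary
projection of `h`. Write `f = δ e + f'` with `δ > 0` small, so that `f'` still lies in the cone and
`h(f') ≠ 0`. For real `x`, the polynomial `t ↦ h(x + iδe + tf')` has no real zero, and its zeros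
stay bounded as `x` varies locally. By Hurwitz's theorem, whether it has a zero in the upper
half-plane does not depend on `x`. For `x = 0` it has none because `f'` lies in the cone.

Second, let `m` be the multiplicity of `h` at `a` and let `hₘ` be the degree `m` part of `h(a + x)`.
Then `ε⁻ᵐ h(a + εw) → hₘ(w)` as `ε → 0`. For `ε > 0` the left-hand side has no zero whose imaginary
part lies in the open cone, hence by Hurwitz's theorem neither does the nonzero limit `hₘ`. So
`hₘ(if) ≠ 0`, that is, the coefficient of `tᵐ` in `h(a - tf)` does not vanish.
-/

open Filter Topology Bornology

section Hurwitz

theorem exists_mem_ball_eq_zero_of_norm_lt_on_sphere {f : ℂ → ℂ} {z₀ : ℂ} {r : ℝ} (hr : 0 < r)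
    (hf : DiffContOnCl ℂ f (Metric.ball z₀ r))
    (hlt : ∀ z ∈ Metric.sphere z₀ r, ‖f z₀‖ < ‖f z‖) : ∃ z ∈ Metric.ball z₀ r, f z = 0 := by
  by_contra! hball
  have hclosure : ∀ z ∈ closure (Metric.ball z₀ r), f z ≠ 0 := by
    intro z hz
    rw [closure_ball z₀ hr.ne', ← Metric.ball_union_sphere] at hz
    exact hz.elim (hball z) fun hz => norm_pos_iff.1 ((norm_nonneg _).trans_lt (hlt z hz))
  obtain ⟨w, hw, hmax⟩ := Complex.exists_mem_frontier_isMaxOn_norm Metric.isBounded_ball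
    (Metric.nonempty_ball.2 hr) (hf.inv hclosure)
  have hz₀ : z₀ ∈ closure (Metric.ball z₀ r) := subset_closure (Metric.mem_ball_self hr)
  have hle : ‖f z₀‖⁻¹ ≤ ‖f w‖⁻¹ := by simpa using hmax hz₀
  exact (hlt w (frontier_ball z₀ hr.ne' ▸ hw)).not_ge
    ((inv_le_inv₀ (norm_pos_iff.2 (hclosure z₀ hz₀))
      (norm_pos_iff.2 (hclosure w (frontier_subset_closure hw)))).1 hle)

variable {X : Type*} [TopologicalSpace X] {F : X → ℂ → ℂ}

theorem eventually_exists_mem_ball_eq_zero (hF : Continuous fun p : X × ℂ => F p.1 p.2)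
    (hd : ∀ x, Differentiable ℂ (F x)) {x₀ : X} {z₀ : ℂ} (hz₀ : F x₀ z₀ = 0)
    (hne : ∃ z, F x₀ z ≠ 0) {r : ℝ} (hr : 0 < r) :
    ∀ᶠ x in 𝓝 x₀, ∃ z ∈ Metric.ball z₀ r, F x z = 0 := by
  have han : AnalyticOnNhd ℂ (F x₀) Set.univ := fun z _ => (hd x₀).analyticAt z
  have hisolated : ∀ᶠ z in 𝓝[≠] z₀, F x₀ z ≠ 0 := by
    refine ((hd x₀).analyticAt z₀).eventually_eq_zero_or_eventually_ne_zero.resolve_left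
      fun hzero => ?_
    obtain ⟨z, hz⟩ := hne
    exact hz (han.eqOn_zero_of_preconnected_of_eventuallyEq_zero isPreconnected_univ
      (Set.mem_univ z₀) hzero (Set.mem_univ z))
  obtain ⟨ρ, hρ, hρne⟩ := Metric.eventually_nhds_iff.1 (eventually_nhdsWithin_iff.1 hisolated)
  obtain ⟨s, hs, hsmin⟩ := exists_between (lt_min hr hρ)
  have hsphere : ∀ᶠ x in 𝓝 x₀, ∀ z ∈ Metric.sphere z₀ s, ‖F x z₀‖ < ‖F x z‖ := by
    refine (isCompact_sphere z₀ s).eventually_forall_of_forall_eventually fun z hz => ?_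
    have hcenter : Continuous fun p : X × ℂ => F p.1 z₀ :=
      hF.comp (continuous_fst.prodMk continuous_const)
    refine hcenter.norm.continuousAt.eventually_lt hF.norm.continuousAt ?_
    have hz' : dist z z₀ = s := hz
    rw [hz₀, norm_zero, norm_pos_iff]
    exact hρne (hz' ▸ hsmin.trans_le (min_le_right _ _)) (dist_pos.1 (hz' ▸ hs))
  filter_upwards [hsphere] with x hx
  obtain ⟨z, hz, hzero⟩ :=
    exists_mem_ball_eq_zero_of_norm_lt_on_sphere hs (hd x).diffContOnCl hx
  exact ⟨z, Metric.ball_subset_ball (hsmin.le.trans (min_le_left _ _)) hz, hzero⟩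

theorem isClopen_setOf_exists_im_pos_eq_zero (hF : Continuous fun p : X × ℂ => F p.1 p.2)
    (hd : ∀ x, Differentiable ℂ (F x)) (hreal : ∀ x, ∀ t : ℝ, F x t ≠ 0)
    (hbdd : ∀ x, ∀ᶠ p in 𝓝 x ×ˢ cobounded ℂ, F p.1 p.2 ≠ 0) :
    IsClopen {x | ∃ z : ℂ, 0 < z.im ∧ F x z = 0} := by
  constructor
  · rw [← isOpen_compl_iff, isOpen_iff_eventually]
    intro x hx
    simp only [Set.mem_compl_iff, Set.mem_ofPred_eq, not_exists, not_and] at hx ⊢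
    obtain ⟨P, hP, Q, hQ, hPQ⟩ := eventually_prod_iff.1 (hbdd x)
    obtain ⟨R, hR⟩ := (isBounded_compl_iff.2 (eventually_iff.1 hQ)).subset_closedBall 0
    have hcompact : IsCompact (Metric.closedBall (0 : ℂ) R ∩ {z | 0 ≤ z.im}) :=
      (isCompact_closedBall 0 R).inter_right (isClosed_le continuous_const Complex.continuous_im)
    have hnear : ∀ᶠ y in 𝓝 x, ∀ z ∈ Metric.closedBall (0 : ℂ) R ∩ {z | 0 ≤ z.im}, F y z ≠ 0 := by
      refine hcompact.eventually_forall_of_forall_eventually fun z hz => ?_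
      refine hF.continuousAt.eventually_ne ?_
      rcases (show 0 ≤ z.im from hz.2).lt_or_eq with him | him
      · exact hx z him
      · rw [show z = (z.re : ℂ) from Complex.ext rfl him.symm]
        exact hreal x z.re
    filter_upwards [hP, hnear] with y hyP hy z him
    by_cases hQz : Q z
    · exact hPQ hyP hQz
    · exact hy z ⟨hR hQz, him.le⟩
  · rw [isOpen_iff_eventually]
    rintro x ⟨z, him, hz⟩
    filter_upwards [eventually_exists_mem_ball_eq_zero hF hd hz ⟨_, hreal x 0⟩ him] with
      y ⟨w, hw, hyw⟩
    have hdist : |(w - z).im| < z.im :=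
      (Complex.abs_im_le_norm _).trans_lt (by simpa [dist_eq_norm] using hw)
    rw [Complex.sub_im, abs_lt] at hdist
    exact ⟨w, by linarith, hyw⟩

theorem ne_zero_of_im_pos_of_preconnectedSpace [PreconnectedSpace X]
    (hF : Continuous fun p : X × ℂ => F p.1 p.2) (hd : ∀ x, Differentiable ℂ (F x))
    (hreal : ∀ x, ∀ t : ℝ, F x t ≠ 0)
    (hbdd : ∀ x, ∀ᶠ p in 𝓝 x ×ˢ cobounded ℂ, F p.1 p.2 ≠ 0)
    {x₀ : X} (hx₀ : ∀ z : ℂ, 0 < z.im → F x₀ z ≠ 0) (x : X) {z : ℂ} (hz : 0 < z.im) :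
    F x z ≠ 0 := by
  intro hzero
  rcases isClopen_iff.1 (isClopen_setOf_exists_im_pos_eq_zero hF hd hreal hbdd) with h | h
  · exact (h ▸ ⟨z, hz, hzero⟩ : x ∈ (∅ : Set X))
  · obtain ⟨w, hw, hw0⟩ : x₀ ∈ {x | ∃ z : ℂ, 0 < z.im ∧ F x z = 0} := h ▸ Set.mem_univ x₀
    exact hx₀ w hw hw0

end Hurwitz

section Evaluation

variable {σ R A : Type*} [CommSemiring R] [CommSemiring A] [Algebra R A]

theorem aeval_smul_of_isHomogeneous {p : MvPolynomial σ R} {d : ℕ} (hp : p.IsHomogeneous d) (c : A)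
    (w : σ → A) : aeval (c • w) p = c ^ d * aeval w p := by
  rw [aeval_def, aeval_def, eval₂_eq, eval₂_eq, Finset.mul_sum]
  refine Finset.sum_congr rfl fun s hs => ?_
  simp only [Pi.smul_apply, smul_eq_mul, mul_pow, Finset.prod_mul_distrib,
    Finset.prod_pow_eq_pow_sum, hp.degree_eq_sum_deg_support hs]
  ring

variable [TopologicalSpace A] [IsTopologicalSemiring A]

theorem continuous_aeval_mvPolynomial (p : MvPolynomial σ R) :
    Continuous fun w : σ → A => aeval w p := by
  simp only [aeval_def, eval₂_eq]
  fun_prop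

end Evaluation

section Translate

variable {σ R : Type*} [CommSemiring R]

/-- The polynomial `p(x + a)`, as in the definition of `multAt`. -/
noncomputable def translatePoly (p : MvPolynomial σ R) (a : σ → R) : MvPolynomial σ R :=
  aeval (fun i => X i + C (a i)) p

variable {A : Type*} [CommSemiring A] [Algebra R A]

theorem aeval_translatePoly (p : MvPolynomial σ R) (a : σ → R) (w : σ → A) :
    aeval w (translatePoly p a) = aeval (fun i => w i + algebraMap R A (a i)) p := by
  rw [translatePoly, comp_aeval_apply]
  congr 2
  ext1 i
  simp

theorem aeval_smul_translatePoly (p : MvPolynomial σ R) (a : σ → R) (c : A) (w : σ → A) :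
    aeval (c • w) (translatePoly p a) = ∑ j ∈ Finset.range ((translatePoly p a).totalDegree + 1),
      c ^ j * aeval w (homogeneousComponent j (translatePoly p a)) := by
  conv_lhs => rw [← sum_homogeneousComponent (translatePoly p a), map_sum]
  exact Finset.sum_congr rfl fun j _ =>
    aeval_smul_of_isHomogeneous (homogeneousComponent_isHomogeneous j _) c w

/-- The rescaled expansion `c⁻ᵐ p(a + cw)` of `p` at `a`, written as a polynomial in `c` and `w` so
that it also makes sense at `c = 0`. The exponents `j - m` are truncated: the definition is meant
for `p` vanishing to order at least `m` at `a`, so that the terms with `j < m` are zero. -/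
noncomputable def rescaledExpansion (p : MvPolynomial σ R) (a : σ → R) (m : ℕ) (c : A)
    (w : σ → A) : A :=
  ∑ j ∈ Finset.range ((translatePoly p a).totalDegree + 1),
    c ^ (j - m) * aeval w (homogeneousComponent j (translatePoly p a))

variable {p : MvPolynomial σ R} {a : σ → R} {m : ℕ}

theorem pow_mul_rescaledExpansion (hlow : ∀ j < m, homogeneousComponent j (translatePoly p a) = 0)
    (c : A) (w : σ → A) :
    c ^ m * rescaledExpansion p a m c w = aeval (c • w) (translatePoly p a) := by
  rw [aeval_smul_translatePoly, rescaledExpansion, Finset.mul_sum]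
  refine Finset.sum_congr rfl fun j _ => ?_
  rcases lt_or_ge j m with hj | hj
  · simp [hlow j hj]
  · rw [← mul_assoc, ← pow_add, Nat.add_sub_cancel' hj]

theorem rescaledExpansion_zero (hlow : ∀ j < m, homogeneousComponent j (translatePoly p a) = 0)
    (w : σ → A) :
    rescaledExpansion p a m 0 w = aeval w (homogeneousComponent m (translatePoly p a)) := by
  rw [rescaledExpansion, Finset.sum_eq_single m]
  · simp
  · intro j _ hj
    rcases hj.lt_or_gt with hj | hj
    · simp [hlow j hj]
    · simp [Nat.sub_ne_zero_of_lt hj]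
  · intro hm
    rw [homogeneousComponent_eq_zero m _ (by simpa using hm), map_zero, mul_zero]

theorem continuous_rescaledExpansion [TopologicalSpace A] [IsTopologicalSemiring A]
    (p : MvPolynomial σ R) (a : σ → R) (m : ℕ) :
    Continuous fun q : A × (σ → A) => rescaledExpansion p a m q.1 q.2 :=
  continuous_finsetSum _ fun j _ => (continuous_fst.pow (j - m)).mul
    ((continuous_aeval_mvPolynomial (homogeneousComponent j (translatePoly p a))).comp
      continuous_snd)

end Translate

section ComplexLine

variable {σ : Type*}

theorem differentiable_aeval_line (p : MvPolynomial σ ℝ) (w v : σ → ℂ) :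
    Differentiable ℂ fun z : ℂ => aeval (w + z • v) p := by
  refine fun z => (AnalyticAt.aeval_mvPolynomial (fun i => ?_) p).differentiableAt
  simp only [Pi.add_apply, Pi.smul_apply, smul_eq_mul]
  fun_prop

theorem differentiable_rescaledExpansion_line (p : MvPolynomial σ ℝ) (a : σ → ℝ) (m : ℕ) (c : ℂ)
    (w v : σ → ℂ) : Differentiable ℂ fun z : ℂ => rescaledExpansion p a m c (w + z • v) :=
  Differentiable.fun_sum fun j _ =>
    (differentiable_aeval_line (homogeneousComponent j (translatePoly p a)) w v).const_mul
      (c ^ (j - m))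

theorem eventually_aeval_line_ne_zero {p : MvPolynomial σ ℝ} {d : ℕ} (hp : p.IsHomogeneous d)
    {v : σ → ℂ} (hv : aeval v p ≠ 0) (w : σ → ℂ) :
    ∀ᶠ q in 𝓝 w ×ˢ cobounded ℂ, aeval (q.1 + q.2 • v) p ≠ 0 := by
  have hlim : Tendsto (fun q : (σ → ℂ) × ℂ => q.2⁻¹ • q.1 + v) (𝓝 w ×ˢ cobounded ℂ) (𝓝 v) := by
    simpa using ((tendsto_inv₀_cobounded.comp tendsto_snd).smul
      (tendsto_fst (f := 𝓝 w) (g := cobounded ℂ))).add_const v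
  have hne := hlim.eventually ((continuous_aeval_mvPolynomial p).continuousAt.eventually_ne hv)
  filter_upwards [hne, tendsto_snd.eventually (eventually_ne_cobounded 0)] with q hq hq0
  rw [← smul_inv_smul₀ hq0 q.1, ← smul_add, aeval_smul_of_isHomogeneous hp]
  exact mul_ne_zero (pow_ne_zero d hq0) hq

end ComplexLine

section LinePoly

variable {n : ℕ} (h : MvPolynomial (Fin n) ℝ) (a v : Fin n → ℝ)

theorem aeval_linePoly {A : Type*} [CommRing A] [Algebra ℝ A] (t : A) :
    Polynomial.aeval t (linePoly h a v) =
      aeval (algebraMap ℝ A ∘ a + t • algebraMap ℝ A ∘ v) h := by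
  rw [linePoly, comp_aeval_apply]
  congr 2
  ext i
  simp only [map_add, map_mul, Polynomial.aeval_C, Polynomial.aeval_X, Pi.add_apply, Pi.smul_apply,
    Function.comp_apply, smul_eq_mul, mul_comm t]

theorem linePoly_eq_aeval_translatePoly :
    linePoly h a v =
      aeval ((Polynomial.X : Polynomial ℝ) • Polynomial.C ∘ v) (translatePoly h a) := by
  rw [aeval_translatePoly, linePoly]
  congr 2
  ext1 i
  simp only [Pi.smul_apply, Function.comp_apply, smul_eq_mul, Polynomial.algebraMap_eq]
  ring

theorem coeff_linePoly (j : ℕ) :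
    (linePoly h a v).coeff j = eval v (homogeneousComponent j (translatePoly h a)) := by
  have heval (p : MvPolynomial (Fin n) ℝ) :
      aeval (Polynomial.C ∘ v) p = Polynomial.C (eval v p) :=
    aeval_algebraMap_apply (Polynomial ℝ) v p
  rw [linePoly_eq_aeval_translatePoly, aeval_smul_translatePoly, Polynomial.finsetSum_coeff,
    Finset.sum_eq_single j]
  · rw [heval, Polynomial.coeff_mul_C, Polynomial.coeff_X_pow_self, one_mul]
  · intro k _ hk
    rw [heval, Polynomial.coeff_mul_C, Polynomial.coeff_X_pow, if_neg hk.symm, zero_mul]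
  · intro hj
    rw [homogeneousComponent_eq_zero j _ (by simpa using hj), map_zero, mul_zero,
      Polynomial.coeff_zero]

variable {h}

theorem homogeneousComponent_multAt_ne_zero (hh : h ≠ 0) :
    homogeneousComponent (multAt h a) (translatePoly h a) ≠ 0 := by
  refine Nat.sInf_mem (s := {m | homogeneousComponent m (translatePoly h a) ≠ 0}) ?_
  by_contra! hempty
  refine hh (MvPolynomial.funext fun x => ?_)
  have hzero : translatePoly h a = 0 := by
    rw [← sum_homogeneousComponent (translatePoly h a)]
    exact Finset.sum_eq_zero fun j _ => not_not.1 (Set.eq_empty_iff_forall_notMem.1 hempty j)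
  have hx := aeval_translatePoly h a (x - a)
  simpa [hzero, aeval_eq_eval] using hx.symm

variable {a}

theorem homogeneousComponent_eq_zero_of_lt_multAt {j : ℕ} (hj : j < multAt h a) :
    homogeneousComponent j (translatePoly h a) = 0 :=
  not_not.1 (Nat.notMem_of_lt_sInf hj)

variable {v}

theorem rootMultiplicity_linePoly_eq_multAt
    (hv : eval v (homogeneousComponent (multAt h a) (translatePoly h a)) ≠ 0) :
    (linePoly h a v).rootMultiplicity 0 = multAt h a := by
  rw [← coeff_linePoly] at hv
  rw [Polynomial.rootMultiplicity_eq_natTrailingDegree']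
  refine le_antisymm (Polynomial.natTrailingDegree_le_of_ne_zero hv)
    (Polynomial.le_natTrailingDegree (fun hzero => hv (by simp [hzero])) fun j hj => ?_)
  rw [coeff_linePoly, homogeneousComponent_eq_zero_of_lt_multAt hj, map_zero]

end LinePoly

section ImaginaryProjection

variable {σ : Type*}

/-- The imaginary projection of a real polynomial: the set of the (componentwise) imaginary parts of
its complex zeros. A homogeneous polynomial is hyperbolic exactly with respect to the directions
outside its imaginary projection. -/
def imaginaryProjection (p : MvPolynomial σ ℝ) : Set (σ → ℝ) :=
  (Complex.im ∘ ·) '' {z : σ → ℂ | aeval z p = 0}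

variable {p : MvPolynomial σ ℝ} {a : σ → ℝ} {m : ℕ}

theorem eventually_exists_mem_ball_aeval_translatePoly_eq_zero
    (hlow : ∀ j < m, homogeneousComponent j (translatePoly p a) = 0) {w v : σ → ℂ}
    (hw : aeval w (homogeneousComponent m (translatePoly p a)) = 0)
    (hwv : aeval (w + v) (homogeneousComponent m (translatePoly p a)) ≠ 0) {r : ℝ} (hr : 0 < r) :
    ∀ᶠ c : ℂ in 𝓝 0, ∃ z ∈ Metric.ball (0 : ℂ) r,
      aeval (c • (w + z • v)) (translatePoly p a) = 0 := by
  have hcont : Continuous fun q : ℂ × ℂ => rescaledExpansion p a m q.1 (w + q.2 • v) :=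
    (continuous_rescaledExpansion p a m).comp
      (continuous_fst.prodMk (continuous_const.add (continuous_snd.smul continuous_const)))
  have hzero : rescaledExpansion p a m 0 (w + (0 : ℂ) • v) = 0 := by
    simpa [rescaledExpansion_zero hlow]
  have hne : rescaledExpansion p a m 0 (w + (1 : ℂ) • v) ≠ 0 := by
    simpa [rescaledExpansion_zero hlow]
  filter_upwards [eventually_exists_mem_ball_eq_zero hcont
    (fun c => differentiable_rescaledExpansion_line p a m c w v) hzero ⟨1, hne⟩ hr] with
    c ⟨z, hz, hcz⟩
  exact ⟨z, hz, by rw [← pow_mul_rescaledExpansion hlow, hcz, mul_zero]⟩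

theorem eval_homogeneousComponent_translatePoly_ne_zero
    (hlow : ∀ j < m, homogeneousComponent j (translatePoly p a) = 0)
    (hm : homogeneousComponent m (translatePoly p a) ≠ 0) {U : Set (σ → ℝ)} (hU : IsOpen U)
    (hdisj : ∀ v ∈ U, ∀ c : ℝ, 0 < c → c • v ∉ imaginaryProjection p) {v : σ → ℝ} (hv : v ∈ U) :
    eval v (homogeneousComponent m (translatePoly p a)) ≠ 0 := by
  intro hzero
  set q := homogeneousComponent m (translatePoly p a) with hq
  obtain ⟨y, hy⟩ : ∃ y, eval y q ≠ 0 := by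
    by_contra! hall
    exact hm (MvPolynomial.funext fun y => by rw [hall y, map_zero])
  have heval (x : σ → ℝ) : aeval (Complex.I • Complex.ofReal ∘ x) q = Complex.I ^ m * eval x q := by
    rw [aeval_smul_of_isHomogeneous (homogeneousComponent_isHomogeneous m _)]
    exact congrArg _ (aeval_algebraMap_apply ℂ x q)
  have hline : Complex.I • Complex.ofReal ∘ v + Complex.I • Complex.ofReal ∘ (y - v) =
      Complex.I • Complex.ofReal ∘ y := by
    rw [Complex.ofReal_comp_sub, smul_sub, add_sub_cancel]
  have hUnear : ∀ᶠ s : ℝ in 𝓝 0, v + s • (y - v) ∈ U := by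
    have hcont : Continuous fun s : ℝ => v + s • (y - v) := by fun_prop
    exact hcont.continuousAt.eventually_mem (hU.mem_nhds (by simpa using hv))
  obtain ⟨r, hr, hrU⟩ := Metric.eventually_nhds_iff.1 hUnear
  have hroots := eventually_exists_mem_ball_aeval_translatePoly_eq_zero hlow
    (w := Complex.I • Complex.ofReal ∘ v) (v := Complex.I • Complex.ofReal ∘ (y - v))
    (by rw [← hq, heval, hzero, Complex.ofReal_zero, mul_zero])
    (by rw [← hq, hline, heval]; simp [hy]) hr
  have hlim : Tendsto Complex.ofReal (𝓝[>] 0) (𝓝 0) :=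
    (Complex.continuous_ofReal.tendsto' 0 0 rfl).mono_left nhdsWithin_le_nhds
  obtain ⟨c, ⟨z, hz, hcz⟩, hc⟩ := ((hlim.eventually hroots).and eventually_mem_nhdsWithin).exists
  have hz_re : dist z.re 0 < r := by
    simpa [dist_eq_norm] using (Complex.abs_re_le_norm z).trans_lt (mem_ball_zero_iff.1 hz)
  rw [aeval_translatePoly] at hcz
  refine hdisj _ (hrU hz_re) c hc ⟨_, hcz, ?_⟩
  ext i
  simp

end ImaginaryProjection

section Hyperbolic

theorem exists_pos_sub_smul_mem {E : Type*} [AddCommGroup E] [Module ℝ E] [TopologicalSpace E]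
    [ContinuousSub E] [ContinuousSMul ℝ E] {U : Set E} (hU : IsOpen U) {x : E} (hx : x ∈ U)
    (y : E) : ∃ δ : ℝ, 0 < δ ∧ x - δ • y ∈ U := by
  have hcont : Continuous fun δ : ℝ => x - δ • y := by fun_prop
  have hnear : ∀ᶠ δ in 𝓝[>] (0 : ℝ), x - δ • y ∈ U :=
    (hcont.continuousAt.eventually_mem (hU.mem_nhds (by simpa using hx))).filter_mono
      nhdsWithin_le_nhds
  exact (eventually_mem_nhdsWithin.and hnear).exists

variable {n d : ℕ} {h : MvPolynomial (Fin n) ℝ} {e f : Fin n → ℝ}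

theorem smul_notMem_imaginaryProjection (hhyp : IsHyperbolic h e) {α : ℝ} (hα : α ≠ 0) :
    α • e ∉ imaginaryProjection h := by
  rintro ⟨z, hz, him⟩
  have hline : Polynomial.aeval (-(α * Complex.I)) (linePoly h (Complex.re ∘ z) (-e)) = 0 := by
    rw [aeval_linePoly, ← show aeval z h = 0 from hz]
    congr 2
    ext i
    have himi : (z i).im = α * e i := congrFun him i
    apply Complex.ext <;> simp [himi]
  exact hα (by simpa using hhyp.2 _ _ hline)

theorem aeval_sub_smul_ne_zero_of_mem_hypCone (hf : f ∈ hypCone h e) {s : ℂ}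
    (hs : ¬ (s.im = 0 ∧ 0 ≤ s.re)) :
    aeval (Complex.ofReal ∘ f - s • Complex.ofReal ∘ e) h ≠ 0 := by
  refine fun hzero => hs (hf s ?_)
  rw [aeval_linePoly, ← hzero]
  congr 2
  ext i
  simp [sub_eq_add_neg]

theorem aeval_ofReal_ne_zero_of_mem_interior_hypCone (hf : f ∈ interior (hypCone h e)) :
    aeval (Complex.ofReal ∘ f) h ≠ 0 := by
  obtain ⟨δ, hδ, hmem⟩ := exists_pos_sub_smul_mem isOpen_interior hf e
  have hne := aeval_sub_smul_ne_zero_of_mem_hypCone (s := -δ) (interior_subset hmem) (by simpa)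
  convert hne using 3
  ext i
  simp

theorem aeval_I_smul_add_smul_ne_zero_of_mem_hypCone (hhom : h.IsHomogeneous d)
    (hf : f ∈ hypCone h e) {α : ℝ} (hα : 0 < α) {t : ℂ} (ht : 0 < t.im) :
    aeval ((α * Complex.I) • Complex.ofReal ∘ e + t • Complex.ofReal ∘ f) h ≠ 0 := by
  have ht0 : t ≠ 0 := fun hzero => by simp [hzero] at ht
  obtain ⟨s, hs⟩ : ∃ s, t * s = -(α * Complex.I) := ⟨_, mul_div_cancel₀ _ ht0⟩
  have hs_neg : ¬ (s.im = 0 ∧ 0 ≤ s.re) := by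
    rintro ⟨him, hre⟩
    have him_eq : t.im * s.re = -α := by simpa [him] using congrArg Complex.im hs
    linarith [mul_nonneg ht.le hre]
  have hfactor : (α * Complex.I) • Complex.ofReal ∘ e + t • Complex.ofReal ∘ f =
      t • (Complex.ofReal ∘ f - s • Complex.ofReal ∘ e) := by
    rw [smul_sub, smul_smul, hs, neg_smul, sub_neg_eq_add, add_comm]
  rw [hfactor, aeval_smul_of_isHomogeneous hhom]
  exact mul_ne_zero (pow_ne_zero d ht0) (aeval_sub_smul_ne_zero_of_mem_hypCone hf hs_neg)

theorem add_smul_notMem_imaginaryProjection (hhom : h.IsHomogeneous d) (hhyp : IsHyperbolic h e)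
    (hf : f ∈ hypCone h e) (hf0 : aeval (Complex.ofReal ∘ f) h ≠ 0) {α β : ℝ} (hα : 0 < α)
    (hβ : 0 < β) : α • e + β • f ∉ imaginaryProjection h := by
  rintro ⟨z, hz, him⟩
  let w (x : Fin n → ℝ) : Fin n → ℂ := Complex.ofReal ∘ x + (α * Complex.I) • Complex.ofReal ∘ e
  have hw : Continuous w := by fun_prop
  let F (x : Fin n → ℝ) (t : ℂ) : ℂ := aeval (w x + t • Complex.ofReal ∘ f) h
  have hF : Continuous fun p : (Fin n → ℝ) × ℂ => F p.1 p.2 :=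
    (continuous_aeval_mvPolynomial h).comp (by fun_prop)
  have hreal (x : Fin n → ℝ) (t : ℝ) : F x t ≠ 0 := fun hzero => by
    refine smul_notMem_imaginaryProjection hhyp hα.ne' ⟨_, hzero, ?_⟩
    ext i
    simp [w]
  have hbdd (x : Fin n → ℝ) : ∀ᶠ p in 𝓝 x ×ˢ cobounded ℂ, F p.1 p.2 ≠ 0 :=
    ((hw.tendsto x).prodMap tendsto_id).eventually (eventually_aeval_line_ne_zero hhom hf0 (w x))
  have hzero (t : ℂ) (ht : 0 < t.im) : F 0 t ≠ 0 := by
    simpa [F, w] using aeval_I_smul_add_smul_ne_zero_of_mem_hypCone hhom hf hα ht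
  have hpoint : w (Complex.re ∘ z) + (β * Complex.I) • Complex.ofReal ∘ f = z := by
    ext i
    have himi : (z i).im = α * e i + β * f i := congrFun him i
    apply Complex.ext <;> simp [w, himi]
  have hne := ne_zero_of_im_pos_of_preconnectedSpace hF
    (fun x => differentiable_aeval_line h (w x) (Complex.ofReal ∘ f)) hreal hbdd hzero
    (Complex.re ∘ z) (z := β * Complex.I) (by simpa)
  exact hne ((congrArg (aeval · h) hpoint).trans hz)

theorem smul_notMem_imaginaryProjection_of_mem_interior_hypCone (hhom : h.IsHomogeneous d)
    (hhyp : IsHyperbolic h e) (hf : f ∈ interior (hypCone h e)) {c : ℝ} (hc : 0 < c) :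
    c • f ∉ imaginaryProjection h := by
  obtain ⟨δ, hδ, hmem⟩ := exists_pos_sub_smul_mem isOpen_interior hf e
  have hsplit : c • f = (c * δ) • e + c • (f - δ • e) := by module
  rw [hsplit]
  exact add_smul_notMem_imaginaryProjection hhom hhyp (interior_subset hmem)
    (aeval_ofReal_ne_zero_of_mem_interior_hypCone hmem) (mul_pos hc hδ) hc

end Hyperbolic

/-- For a homogeneous polynomial `h` hyperbolic with respect to `e` and
any `a`, the order of vanishing of `t ↦ h(a − t·f)` at `t = 0` equals the multiplicity of
`h` at `a`, for every `f` in the interior of the hyperbolicity cone. -/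
theorem order_of_vanishing_eq_multiplicity
    {n d : ℕ} (h : MvPolynomial (Fin n) ℝ) (e : Fin n → ℝ)
    (hhom : h.IsHomogeneous d) (hhyp : IsHyperbolic h e)
    (a : Fin n → ℝ) (f : Fin n → ℝ) (hf : f ∈ interior (hypCone h e)) :
    Polynomial.rootMultiplicity 0 (linePoly h a (-f)) = multAt h a := by
  have hh : h ≠ 0 := by
    rintro rfl
    exact hhyp.1 (map_zero _)
  have hf_ne : eval f (homogeneousComponent (multAt h a) (translatePoly h a)) ≠ 0 :=
    eval_homogeneousComponent_translatePoly_ne_zero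
      (fun _ => homogeneousComponent_eq_zero_of_lt_multAt)
      (homogeneousComponent_multAt_ne_zero a hh) isOpen_interior
      (fun _ hv _ => smul_notMem_imaginaryProjection_of_mem_interior_hypCone hhom hhyp hv) hf
  have hneg := aeval_smul_of_isHomogeneous
    (homogeneousComponent_isHomogeneous (multAt h a) (translatePoly h a)) (-1) f
  rw [neg_one_smul, aeval_eq_eval, aeval_eq_eval] at hneg
  refine rootMultiplicity_linePoly_eq_multAt ?_
  rw [hneg]
  exact mul_ne_zero (pow_ne_zero _ (by norm_num)) hf_ne
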